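/- arXiv:math/0610009 — 2 statements merged into one kernel-verified Lean document; each statement's English description precedes it below -/
import Mathlib

section
/- Gluing Lemma: let M be a precofibration category, and consider a commutative cube whose top face is a pushout of f₁₂ : A₁ → A₂ (a cofibration) along f₁₃ : A₁ → A₃, and whose bottom face is a pushout of g₁₂ : B₁ → B₂ (a cofibration) along g₁₃ : B₁ → B₃, with A₁, A₃, B₁, B₃ cofibrant, connected by vertical maps u₁ : A₁ → B₁, u₂ : A₂ → B₂, u₃ : A₃ → B₃ and the induced u₄ : A₄ → B₄. If u₁, u₂, u₃ are weak equivalences, then u₄ is a weak equivalence. -/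
open CategoryTheory CategoryTheory.Limits

universe w v u

variable (C : Type u) [Category.{v} C] [HasInitial C]

/-- An Anderson–Brown–Cisinski precofibration category structure on `C`:
classes of weak equivalences `W` and cofibrations `Cof` satisfying the axioms CF1–CF4. -/
structure PrecofCat where
  /-- the class of weak equivalences -/
  W : MorphismProperty C
  /-- the class of cofibrations -/
  Cof : MorphismProperty C
  /-- CF1: cofibrations are closed under composition -/
  cof_comp : ∀ {X Y Z : C} (f : X ⟶ Y) (g : Y ⟶ Z), Cof f → Cof g → Cof (f ≫ g)
  /-- CF1: the initial object is cofibrant -/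
  initial_cofibrant : Cof (initial.to (⊥_ C))
  /-- CF1: isomorphisms are weak equivalences -/
  iso_W : ∀ {X Y : C} (f : X ⟶ Y), IsIso f → W f
  /-- CF1: isomorphisms with cofibrant domain are cofibrations -/
  iso_cof : ∀ {X Y : C} (f : X ⟶ Y), IsIso f → Cof (initial.to X) → Cof f
  /-- CF2: two-out-of-three -/
  W_comp : ∀ {X Y Z : C} (f : X ⟶ Y) (g : Y ⟶ Z), W f → W g → W (f ≫ g)
  W_cancel_left : ∀ {X Y Z : C} (f : X ⟶ Y) (g : Y ⟶ Z), W f → W (f ≫ g) → W g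
  W_cancel_right : ∀ {X Y Z : C} (f : X ⟶ Y) (g : Y ⟶ Z), W g → W (f ≫ g) → W f
  /-- CF3: pushouts of cofibrations with cofibrant corners exist -/
  pushout_exists : ∀ {A B X : C} (i : A ⟶ B) (f : A ⟶ X), Cof i →
      Cof (initial.to A) → Cof (initial.to X) →
      ∃ (D : C) (g : B ⟶ D) (j : X ⟶ D), IsPushout i f g j
  /-- CF3: the pushout of a cofibration is a cofibration -/
  pushout_cof : ∀ {A B X D : C} (i : A ⟶ B) (f : A ⟶ X) (g : B ⟶ D) (j : X ⟶ D),
      Cof i → Cof (initial.to A) → Cof (initial.to X) → IsPushout i f g j → Cof j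
  /-- CF3: the pushout of a trivial cofibration is a trivial cofibration -/
  pushout_triv_cof : ∀ {A B X D : C} (i : A ⟶ B) (f : A ⟶ X) (g : B ⟶ D) (j : X ⟶ D),
      Cof i → W i → Cof (initial.to A) → Cof (initial.to X) → IsPushout i f g j → W j
  /-- CF4: factorization of maps with cofibrant domain -/
  factorization : ∀ {A B : C} (f : A ⟶ B), Cof (initial.to A) →
      ∃ (Z : C) (f' : A ⟶ Z) (r : Z ⟶ B), Cof f' ∧ W r ∧ f' ≫ r = f

variable {C}

/-- An object is cofibrant if the map from the initial object is a cofibration. -/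
def PrecofCat.Cofibrant (P : PrecofCat C) (A : C) : Prop :=
  P.Cof (initial.to A)

/-!
The key point is left properness: the pushout of a weak equivalence between cofibrant objects along
a cofibration is a weak equivalence. For the pushout along a trivial cofibration this is an axiom,
and Brown's factorization reduces the general case to a retraction `r : Z ⟶ X` of a trivial
cofibration. Given such an `r` and a cofibration `i : Z ⟶ B`, the pushout of `r` along `i` is also
what the fold map `Z ⊔_X B ⟶ B` becomes when pushed out along `r`. The fold map is a weak
equivalence between objects cofibrant under `Z`, and pushing out under a fixed object preserves
these by Ken Brown's argument.

In the cube, `A₂ ⟶ B₁ ⊔_{A₁} A₂` and `A₄ ⟶ B₃ ⊔_{A₃} A₄` are weak equivalences by left properness.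
The induced map `B₁ ⊔_{A₁} A₂ ⟶ B₂` is then a weak equivalence between objects cofibrant under `B₁`,
and its pushout along `g₁₃` is `B₃ ⊔_{A₃} A₄ ⟶ B₄`.
-/

namespace PrecofCat

variable {P : PrecofCat C}

lemma Cofibrant.of_cof {A B : C} {i : A ⟶ B} (hA : P.Cofibrant A) (hi : P.Cof i) :
    P.Cofibrant B := by
  have hcomp : P.Cof (initial.to A ≫ i) := P.cof_comp _ _ hA hi
  rwa [initial.to_comp] at hcomp

lemma W_iff_of_comp_eq_id {X Z : C} {b : X ⟶ Z} {r : Z ⟶ X} (hbr : b ≫ r = 𝟙 X) :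
    P.W b ↔ P.W r := by
  have hid : P.W (b ≫ r) := hbr ▸ P.iso_W (𝟙 X) inferInstance
  exact ⟨fun hb ↦ P.W_cancel_left b r hb hid, fun hr ↦ P.W_cancel_right b r hr hid⟩

/- Obtained by factoring the map `B ⊔_A B' ⟶ B'` with components `w` and `𝟙 B'`. -/
lemma exists_brown_factorization_under {A B B' : C} {i : A ⟶ B} {i' : A ⟶ B'} {w : B ⟶ B'}
    (hA : P.Cofibrant A) (hi : P.Cof i) (hi' : P.Cof i') (hiw : i ≫ w = i') (hw : P.W w) :
    ∃ (Z : C) (a : B ⟶ Z) (b : B' ⟶ Z) (r : Z ⟶ B'), P.Cof a ∧ P.W a ∧ P.Cof b ∧ P.W b ∧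
      a ≫ r = w ∧ b ≫ r = 𝟙 B' ∧ i ≫ a = i' ≫ b := by
  have hB : P.Cofibrant B := hA.of_cof hi
  have hB' : P.Cofibrant B' := hA.of_cof hi'
  obtain ⟨E, k, l, hE⟩ := P.pushout_exists i i' hi hA hB'
  have hl : P.Cof l := P.pushout_cof _ _ _ _ hi hA hB' hE
  have hk : P.Cof k := P.pushout_cof _ _ _ _ hi' hA hB hE.flip
  obtain ⟨Z, c, r, hc, hr, hcr⟩ :=
    P.factorization (hE.desc w (𝟙 B') (by simpa using hiw)) (hB.of_cof hk)
  have har : (k ≫ c) ≫ r = w := by simp [hcr]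
  have hbr : (l ≫ c) ≫ r = 𝟙 B' := by simp [hcr]
  exact ⟨Z, k ≫ c, l ≫ c, r, P.cof_comp _ _ hk hc, P.W_cancel_right _ r hr (by rwa [har]),
    P.cof_comp _ _ hl hc, (W_iff_of_comp_eq_id hbr).2 hr, har, hbr, hE.w_assoc c⟩

lemma exists_brown_factorization {A B : C} (hA : P.Cofibrant A) (hB : P.Cofibrant B)
    {w : A ⟶ B} (hw : P.W w) :
    ∃ (Z : C) (a : A ⟶ Z) (b : B ⟶ Z) (r : Z ⟶ B), P.Cof a ∧ P.W a ∧ P.Cof b ∧ P.W b ∧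
      a ≫ r = w ∧ b ≫ r = 𝟙 B := by
  obtain ⟨Z, a, b, r, ha, haW, hb, hbW, har, hbr, -⟩ :=
    exists_brown_factorization_under P.initial_cofibrant hA hB (initial.to_comp w) hw
  exact ⟨Z, a, b, r, ha, haW, hb, hbW, har, hbr⟩

/- Both cofibrations in Brown's factorization of `w` under `A` are trivial, so pushing out along `f`
keeps them weak equivalences. -/
lemma W_of_isPushout_under {A B B' X D D' : C} {i : A ⟶ B} {i' : A ⟶ B'} {f : A ⟶ X}
    {g : B ⟶ D} {g' : B' ⟶ D'} {j : X ⟶ D} {j' : X ⟶ D'} {w : B ⟶ B'} {d : D ⟶ D'}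
    (hD : IsPushout i f g j) (hD' : IsPushout i' f g' j')
    (hA : P.Cofibrant A) (hX : P.Cofibrant X) (hi : P.Cof i) (hi' : P.Cof i')
    (hiw : i ≫ w = i') (hgd : g ≫ d = w ≫ g') (hjd : j ≫ d = j') (hw : P.W w) :
    P.W d := by
  obtain ⟨Z, a, b, r, ha, haW, hb, hbW, har, hbr, hab⟩ :=
    exists_brown_factorization_under hA hi hi' hiw hw
  have hB : P.Cofibrant B := hA.of_cof hi
  have hB' : P.Cofibrant B' := hA.of_cof hi'
  have hDc : P.Cofibrant D := hX.of_cof (P.pushout_cof _ _ _ _ hi hA hX hD)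
  have hDc' : P.Cofibrant D' := hX.of_cof (P.pushout_cof _ _ _ _ hi' hA hX hD')
  obtain ⟨E, h, p, hE⟩ := P.pushout_exists a g ha hB hDc
  have hpW : P.W p := P.pushout_triv_cof _ _ _ _ ha haW hB hDc hE
  have hZE : IsPushout (i' ≫ b) f h (j ≫ p) := hab ▸ hD.paste_horiz hE
  obtain ⟨q, hq, hjq⟩ : ∃ q : D' ⟶ E, IsPushout b g' h q ∧ j' ≫ q = j ≫ p :=
    ⟨_, hZE.of_left' hD', hD'.inr_desc _ _ _⟩
  have hqW : P.W q := P.pushout_triv_cof _ _ _ _ hb hbW hB' hDc' hq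
  obtain ⟨s, hhs, hps⟩ := hE.exists_desc (r ≫ g') d (by rw [reassoc_of% har, hgd])
  have hqs : q ≫ s = 𝟙 D' := by
    apply hD'.hom_ext
    · rw [← hq.w_assoc, hhs, reassoc_of% hbr, Category.comp_id]
    · rw [reassoc_of% hjq, hps, hjd, Category.comp_id]
  rw [← hps]
  exact P.W_comp p s hpW ((W_iff_of_comp_eq_id hqs).1 hqW)

lemma W_inl_of_isPushout_of_comp_eq_id {X Z B D : C} {b : X ⟶ Z} {r : Z ⟶ X} {i : Z ⟶ B}
    {g : B ⟶ D} {j : X ⟶ D} (hD : IsPushout i r g j) (hX : P.Cofibrant X)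
    (hb : P.Cof b) (hbW : P.W b) (hbr : b ≫ r = 𝟙 X) (hi : P.Cof i) :
    P.W g := by
  have hZ : P.Cofibrant Z := hX.of_cof hb
  have hbi : P.Cof (b ≫ i) := P.cof_comp b i hb hi
  obtain ⟨T, l, k, hT⟩ := P.pushout_exists (b ≫ i) b hbi hX hZ
  have hk : P.Cof k := P.pushout_cof _ _ _ _ hbi hX hZ hT
  have hlW : P.W l := P.pushout_triv_cof _ _ _ _ hb hbW hX (hZ.of_cof hi) hT.flip
  obtain ⟨φ, hlφ, hkφ⟩ := hT.exists_desc (𝟙 B) i (Category.comp_id _)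
  have hφW : P.W φ := (W_iff_of_comp_eq_id hlφ).1 hlW
  obtain ⟨ρ, hρ, hlρ⟩ : ∃ ρ : T ⟶ B, IsPushout k r ρ (b ≫ i) ∧ l ≫ ρ = 𝟙 B :=
    ⟨_, (hbr ▸ IsPushout.id_vert (b ≫ i)).of_top' hT, hT.inl_desc _ _ _⟩
  have hbig : (b ≫ i) ≫ g = j := by rw [Category.assoc, hD.w, reassoc_of% hbr]
  have hρg : ρ ≫ g = φ ≫ g := by
    apply hT.hom_ext
    · rw [reassoc_of% hlρ, reassoc_of% hlφ]
    · rw [hρ.w_assoc, hbig, reassoc_of% hkφ, hD.w]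
  exact W_of_isPushout_under hρ hD hZ hX hk hi hkφ hρg hbig hφW

lemma W_inl_of_isPushout {A B X D : C} {i : A ⟶ B} {f : A ⟶ X} {g : B ⟶ D} {j : X ⟶ D}
    (hD : IsPushout i f g j) (hA : P.Cofibrant A) (hX : P.Cofibrant X)
    (hi : P.Cof i) (hf : P.W f) :
    P.W g := by
  obtain ⟨Z, a, b, r, ha, haW, hb, hbW, rfl, hbr⟩ := exists_brown_factorization hA hX hf
  have hZ : P.Cofibrant Z := hA.of_cof ha
  obtain ⟨E, p, i', hE⟩ := P.pushout_exists i a hi hA hZ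
  have hi' : P.Cof i' := P.pushout_cof _ _ _ _ hi hA hZ hE
  have hpW : P.W p := P.pushout_triv_cof _ _ _ _ ha haW hA (hA.of_cof hi) hE.flip
  obtain ⟨q, hq, hpq⟩ : ∃ q : E ⟶ D, IsPushout i' r q j ∧ p ≫ q = g :=
    ⟨_, hD.of_top' hE, hE.inl_desc _ _ _⟩
  rw [← hpq]
  exact P.W_comp p q hpW (W_inl_of_isPushout_of_comp_eq_id hq hX hb hbW hbr hi')

end PrecofCat

/-- Gluing Lemma: in a commutative cube whose top and bottom faces are pushouts of
cofibrations with appropriate cofibrant corners, if three of the vertical maps are weak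
equivalences then so is the fourth. -/
theorem gluing_lemma (P : PrecofCat C)
    {A₁ A₂ A₃ A₄ B₁ B₂ B₃ B₄ : C}
    (f₁₂ : A₁ ⟶ A₂) (f₁₃ : A₁ ⟶ A₃) (f₂₄ : A₂ ⟶ A₄) (f₃₄ : A₃ ⟶ A₄)
    (g₁₂ : B₁ ⟶ B₂) (g₁₃ : B₁ ⟶ B₃) (g₂₄ : B₂ ⟶ B₄) (g₃₄ : B₃ ⟶ B₄)
    (u₁ : A₁ ⟶ B₁) (u₂ : A₂ ⟶ B₂) (u₃ : A₃ ⟶ B₃) (u₄ : A₄ ⟶ B₄)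
    (htop : IsPushout f₁₂ f₁₃ f₂₄ f₃₄) (hbot : IsPushout g₁₂ g₁₃ g₂₄ g₃₄)
    (hf₁₂ : P.Cof f₁₂) (hg₁₂ : P.Cof g₁₂)
    (hA₁ : P.Cofibrant A₁) (hA₃ : P.Cofibrant A₃)
    (hB₁ : P.Cofibrant B₁) (hB₃ : P.Cofibrant B₃)
    (sq₂ : u₁ ≫ g₁₂ = f₁₂ ≫ u₂) (sq₃ : u₁ ≫ g₁₃ = f₁₃ ≫ u₃)
    (sq₂₄ : u₂ ≫ g₂₄ = f₂₄ ≫ u₄) (sq₃₄ : u₃ ≫ g₃₄ = f₃₄ ≫ u₄)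
    (hw₁ : P.W u₁) (hw₂ : P.W u₂) (hw₃ : P.W u₃) :
    P.W u₄ := by
  have hf₃₄ : P.Cof f₃₄ := P.pushout_cof _ _ _ _ hf₁₂ hA₁ hA₃ htop
  obtain ⟨Q, p, q, hQ⟩ := P.pushout_exists f₁₂ u₁ hf₁₂ hA₁ hB₁
  obtain ⟨R, h, k, hR⟩ := P.pushout_exists f₃₄ u₃ hf₃₄ hA₃ hB₃
  have hpW : P.W p := PrecofCat.W_inl_of_isPushout hQ hA₁ hB₁ hf₁₂ hw₁
  have hhW : P.W h := PrecofCat.W_inl_of_isPushout hR hA₃ hB₃ hf₃₄ hw₃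
  obtain ⟨w, hpw, hqw⟩ := hQ.exists_desc u₂ g₁₂ sq₂.symm
  obtain ⟨d, hhd, hkd⟩ := hR.exists_desc u₄ g₃₄ sq₃₄.symm
  have hwW : P.W w := P.W_cancel_left p w hpW (hpw ▸ hw₂)
  obtain ⟨t, ht, hpt⟩ : ∃ t : Q ⟶ R, IsPushout q g₁₃ t k ∧ p ≫ t = f₂₄ ≫ h :=
    ⟨_, (sq₃ ▸ htop.paste_vert hR).of_top' hQ, hQ.inl_desc _ _ _⟩
  have htd : t ≫ d = w ≫ g₂₄ := by
    apply hQ.hom_ext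
    · rw [reassoc_of% hpt, hhd, reassoc_of% hpw, sq₂₄]
    · rw [ht.w_assoc, hkd, reassoc_of% hqw, hbot.w]
  have hdW : P.W d := PrecofCat.W_of_isPushout_under ht hbot hB₁ hB₃
    (P.pushout_cof _ _ _ _ hf₁₂ hA₁ hB₁ hQ) hg₁₂ hqw htd hkd hwW
  rw [← hhd]
  exact P.W_comp h d hhW hdW
end

section
/- Excision Lemma: in a precofibration category, given a cofibration i : A → B with A cofibrant and a weak equivalence f : A → C with C cofibrant, the pushout of f along i exists and the induced map B → B ⊔_A C is again a weak equivalence. -/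
open CategoryTheory CategoryTheory.Limits

universe w v u

variable (C : Type u) [Category.{v} C] [HasInitial C]

variable {C}

/-!
For `f : A ⟶ X` between cofibrant objects, write `f_* B` for the pushout along `f` of an object
`B` equipped with a cofibration `A ⟶ B`. The functor `f_*` sends trivial cofibrations under `A` to
weak equivalences, hence, by Brown's lemma relative to `A`, it preserves all weak equivalences
under `A` between such objects.

Factor a weak equivalence `f` as a trivial cofibration followed by a retraction `r : Z ⟶ X` of a
trivial cofibration `s : X ⟶ Z`. The first factor is covered by CF3. For the second, an object `B`
with a cofibration `Z ⟶ B` also lies under `X` by restriction along `s`. The counit `s_* B ⟶ B` is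
a retraction of the trivial cofibration `B ⟶ s_* B`, hence a weak equivalence, and it lies
under `Z`. Since `r_* s_* B = B`, applying `r_*` to the counit yields the map `B ⟶ r_* B`.
-/

namespace PrecofCat

variable {P : PrecofCat C}

variable (P) in
lemma W_id (A : C) : P.W (𝟙 A) := P.iso_W _ inferInstance

variable (P) in
/-- The trivial cofibrations, i.e. the cofibrations that are weak equivalences: the class of weak
equivalences which CF3 allows to push out. -/
def TrivCof : MorphismProperty C := P.Cof ⊓ P.W

lemma TrivCof.W_of_isPushout {A B X D : C} {i : A ⟶ B} {f : A ⟶ X} {g : B ⟶ D} {j : X ⟶ D}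
    (hi : P.TrivCof i) (hA : P.Cofibrant A) (hX : P.Cofibrant X) (h : IsPushout i f g j) :
    P.W j :=
  P.pushout_triv_cof i f g j hi.1 hi.2 hA hX h

lemma exists_brown_factorization_under_s3 {A B₁ B₂ : C} {i₁ : A ⟶ B₁} {i₂ : A ⟶ B₂}
    {h : B₁ ⟶ B₂} (hA : P.Cofibrant A) (hi₁ : P.Cof i₁) (hi₂ : P.Cof i₂)
    (w : i₁ ≫ h = i₂) (hh : P.W h) :
    ∃ (Z : C) (c : B₁ ⟶ Z) (s : B₂ ⟶ Z) (r : Z ⟶ B₂), P.TrivCof c ∧ P.TrivCof s ∧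
      c ≫ r = h ∧ s ≫ r = 𝟙 B₂ ∧ i₁ ≫ c = i₂ ≫ s := by
  have hB₁ := hA.of_cof hi₁
  have hB₂ := hA.of_cof hi₂
  obtain ⟨Q, u, v, hQ⟩ := P.pushout_exists i₁ i₂ hi₁ hA hB₂
  have hv : P.Cof v := P.pushout_cof _ _ _ _ hi₁ hA hB₂ hQ
  have hu : P.Cof u := P.pushout_cof _ _ _ _ hi₂ hA hB₁ hQ.flip
  -- `Z` is a mapping cylinder of `h` relative to `A`.
  obtain ⟨Z, q, r, hq, hr, hqr⟩ :=
    P.factorization (hQ.desc h (𝟙 B₂) (by rw [w, Category.comp_id])) (hB₂.of_cof hv)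
  have hur : (u ≫ q) ≫ r = h := by rw [Category.assoc, hqr, hQ.inl_desc]
  have hvr : (v ≫ q) ≫ r = 𝟙 B₂ := by rw [Category.assoc, hqr, hQ.inr_desc]
  exact ⟨Z, u ≫ q, v ≫ q, r,
    ⟨P.cof_comp _ _ hu hq, P.W_cancel_right _ r hr (hur ▸ hh)⟩,
    ⟨P.cof_comp _ _ hv hq, P.W_cancel_right _ r hr (hvr ▸ P.W_id B₂)⟩,
    hur, hvr, hQ.w_assoc q⟩

section PushoutMap

variable {A B₁ B₂ X D₁ D₂ : C} {i₁ : A ⟶ B₁} {i₂ : A ⟶ B₂} {f : A ⟶ X}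
  {g₁ : B₁ ⟶ D₁} {j₁ : X ⟶ D₁} {g₂ : B₂ ⟶ D₂} {j₂ : X ⟶ D₂} {h : B₁ ⟶ B₂} {k : D₁ ⟶ D₂}

lemma TrivCof.W_pushout_map (hh : P.TrivCof h) (hA : P.Cofibrant A) (hX : P.Cofibrant X)
    (hi₁ : P.Cof i₁) (hD₁ : IsPushout i₁ f g₁ j₁) (hD₂ : IsPushout i₂ f g₂ j₂)
    (wi : i₁ ≫ h = i₂) (wg : g₁ ≫ k = h ≫ g₂) (wj : j₁ ≫ k = j₂) : P.W k := by
  subst wi wj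
  have hk : IsPushout h g₁ g₂ k := hD₂.of_left wg.symm hD₁
  have hD₁' : P.Cofibrant D₁ := hX.of_cof (P.pushout_cof _ _ _ _ hi₁ hA hX hD₁)
  exact hh.W_of_isPushout (hA.of_cof hi₁) hD₁' hk

lemma W_pushout_map (hA : P.Cofibrant A) (hX : P.Cofibrant X)
    (hi₁ : P.Cof i₁) (hi₂ : P.Cof i₂) (hh : P.W h)
    (hD₁ : IsPushout i₁ f g₁ j₁) (hD₂ : IsPushout i₂ f g₂ j₂)
    (wi : i₁ ≫ h = i₂) (wg : g₁ ≫ k = h ≫ g₂) (wj : j₁ ≫ k = j₂) : P.W k := by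
  obtain ⟨Z, c, s, r, hc, hs, hcr, hsr, hcs⟩ :=
    exists_brown_factorization_under_s3 hA hi₁ hi₂ wi hh
  obtain ⟨E, p, q, hE⟩ := P.pushout_exists (i₂ ≫ s) f (P.cof_comp _ _ hi₂ hs.1) hA hX
  obtain ⟨c', hgc, hjc⟩ := hD₁.exists_desc (c ≫ p) q (by rw [reassoc_of% hcs, ← hE.w,
    Category.assoc])
  obtain ⟨s', hgs, hjs⟩ := hD₂.exists_desc (s ≫ p) q (by rw [← hE.w, Category.assoc])
  obtain ⟨r', hpr, hqr⟩ := hE.exists_desc (r ≫ g₂) j₂ (by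
    rw [Category.assoc, reassoc_of% hsr, hD₂.w])
  have hc' : P.W c' := hc.W_pushout_map hA hX hi₁ hD₁ hE hcs hgc hjc
  have hs' : P.W s' := hs.W_pushout_map hA hX hi₂ hD₂ hE rfl hgs hjs
  have hsr' : s' ≫ r' = 𝟙 D₂ := by
    apply hD₂.hom_ext
    · rw [reassoc_of% hgs, hpr, reassoc_of% hsr, Category.comp_id]
    · rw [reassoc_of% hjs, hqr, Category.comp_id]
  have hcr' : c' ≫ r' = k := by
    apply hD₁.hom_ext
    · rw [reassoc_of% hgc, hpr, reassoc_of% hcr, wg]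
    · rw [reassoc_of% hjc, hqr, wj]
  have hr' : P.W r' := P.W_cancel_left s' r' hs' (hsr' ▸ P.W_id D₂)
  exact hcr' ▸ P.W_comp _ _ hc' hr'

end PushoutMap

lemma W_of_isPushout_retraction {Z B X D : C} {i : Z ⟶ B} {r : Z ⟶ X} {s : X ⟶ Z}
    {g : B ⟶ D} {j : X ⟶ D} (hX : P.Cofibrant X) (hi : P.Cof i) (hs : P.TrivCof s)
    (hsr : s ≫ r = 𝟙 X) (hD : IsPushout i r g j) : P.W g := by
  have hZ := hX.of_cof hs.1
  have hsi : P.Cof (s ≫ i) := P.cof_comp _ _ hs.1 hi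
  -- In the notation of the introduction, `B'` is `s_* B`, and `hp` says that `r_* s_* B = B`.
  obtain ⟨B', b, a, hB'⟩ := P.pushout_exists (s ≫ i) s hsi hX hZ
  have ha : P.Cof a := P.pushout_cof _ _ _ _ hsi hX hZ hB'
  have hb : P.W b := hs.W_of_isPushout hX (hZ.of_cof hi) hB'.flip
  obtain ⟨counit, hbc, hac⟩ := hB'.exists_desc (𝟙 B) i (Category.comp_id _)
  have hcounit : P.W counit := P.W_cancel_left b counit hb (hbc ▸ P.W_id B)
  obtain ⟨p, hbp, hap⟩ := hB'.exists_desc (𝟙 B) (r ≫ s ≫ i) (by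
    rw [reassoc_of% hsr, Category.comp_id])
  have hp : IsPushout a r p (s ≫ i) := by
    refine (IsPushout.of_left ?_ hap.symm hB'.flip).flip
    rw [hsr, hbp]
    exact IsPushout.of_id_fst
  have hpg : p ≫ g = counit ≫ g := by
    apply hB'.hom_ext
    · rw [reassoc_of% hbp, reassoc_of% hbc]
    · rw [reassoc_of% hap, reassoc_of% hac, hD.w, reassoc_of% hsr]
  have hjg : (s ≫ i) ≫ g = j := by rw [Category.assoc, hD.w, reassoc_of% hsr]
  exact W_pushout_map hZ hX ha hi hcounit hp hD hac hpg hjg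

end PrecofCat

/-- Excision Lemma: the pushout of a weak equivalence between cofibrant objects along
a cofibration with cofibrant domain exists and is again a weak equivalence. -/
theorem excision (P : PrecofCat C) {A B X : C} (i : A ⟶ B) (f : A ⟶ X)
    (hi : P.Cof i) (hA : P.Cofibrant A) (hX : P.Cofibrant X) (hf : P.W f) :
    ∃ (D : C) (g : B ⟶ D) (j : X ⟶ D), IsPushout i f g j ∧
      ∀ {D' : C} (g' : B ⟶ D') (j' : X ⟶ D'), IsPushout i f g' j' → P.W g' := by
  obtain ⟨D, g, j, hD⟩ := P.pushout_exists i f hi hA hX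
  refine ⟨D, g, j, hD, fun {D'} g' j' hD' => ?_⟩
  obtain ⟨Z, f', s, r, hf', hs, rfl, hsr, -⟩ :=
    PrecofCat.exists_brown_factorization_under_s3 P.initial_cofibrant hA hX (initial.to_comp f) hf
  have hZ := hA.of_cof hf'.1
  obtain ⟨B₁, g₁, i₁, hB₁⟩ := P.pushout_exists i f' hi hA hZ
  have hi₁ : P.Cof i₁ := P.pushout_cof _ _ _ _ hi hA hZ hB₁
  have hg₁ : P.W g₁ := hf'.W_of_isPushout hA (hA.of_cof hi) hB₁.flip
  obtain ⟨k, rfl, hik⟩ := hB₁.exists_desc g' (r ≫ j') (by rw [hD'.w, Category.assoc])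
  have hk : IsPushout i₁ r k j' := (hD'.flip.of_left hik.symm hB₁.flip).flip
  exact P.W_comp _ _ hg₁ (PrecofCat.W_of_isPushout_retraction hX hi₁ hs hsr hk)
end
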